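/- A $(v,m;k_1,\dots,k_m;1,\dots,1)$-GSEDF exists if and only if either $m=2$ and $v=k_1k_2+1$, or $k_i=1$ for all $i$ and $v=m$. -/

import Mathlib

/-- The number of times `g` occurs in the multiset `Δ(A,B) = {x - y : x ∈ A, y ∈ B}`. -/
noncomputable def extDiffCount {G : Type*} [AddCommGroup G] (A B : Finset G) (g : G) : ℕ :=
  letI := Classical.decEq G
  ((A ×ˢ B).filter (fun p => p.1 - p.2 = g)).card

/-- `{D i}` is a `(v, m; k₁,…,k_m; λ₁,…,λ_m)`-GSEDF in the finite abelian group `G`. -/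
def IsGSEDF {G : Type*} [AddCommGroup G] [Fintype G] (v m : ℕ)
    (D : Fin m → Finset G) (k lam : Fin m → ℕ) : Prop :=
  Fintype.card G = v ∧
  (∀ i, (D i).card = k i) ∧
  (∀ i, 0 < k i) ∧ (∀ i, 0 < lam i) ∧
  (∀ i j, i ≠ j → Disjoint (D i) (D j)) ∧
  ∀ i, ∀ g : G, g ≠ 0 →
    (∑ j ∈ Finset.univ.filter (· ≠ i), extDiffCount (D i) (D j) g) = lam i


theorem gs_mem {G : Type*} [AddCommGroup G] {m : ℕ} {D : Fin m → Finset G} {i : Fin m} {g : G}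
    (h : (∑ j ∈ Finset.univ.filter (· ≠ i), extDiffCount (D i) (D j) g) = 1) :
    (∃ j, j ≠ i ∧ ∃ a ∈ D i, ∃ b ∈ D j, a - b = g) ∧
    ∀ j j' a a' b b', j ≠ i → j' ≠ i → a ∈ D i → a' ∈ D i → b ∈ D j → b' ∈ D j' →
      a - b = g → a' - b' = g → j = j' ∧ a = a' ∧ b = b' := by
  classical
  unfold extDiffCount at h
  rw [← Finset.card_sigma, Finset.card_eq_one] at h
  obtain ⟨⟨j0, a0, b0⟩, h0⟩ := h
  rw [Finset.ext_iff] at h0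
  have key : ∀ j a b, (j ≠ i ∧ (a ∈ D i ∧ b ∈ D j) ∧ a - b = g) ↔ (j = j0 ∧ a = a0 ∧ b = b0) := by
    intro j a b
    have := h0 ⟨j, a, b⟩
    simpa [Finset.mem_sigma] using this
  constructor
  · obtain ⟨h1, ⟨h2, h3⟩, h4⟩ := (key j0 a0 b0).2 ⟨rfl, rfl, rfl⟩
    exact ⟨j0, h1, a0, h2, b0, h3, h4⟩
  · intro j j' a a' b b' hj hj' ha ha' hb hb' hg hg'
    obtain ⟨rfl, rfl, rfl⟩ := (key j a b).1 ⟨hj, ⟨ha, hb⟩, hg⟩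
    obtain ⟨rfl, rfl, rfl⟩ := (key j' a' b').1 ⟨hj', ⟨ha', hb'⟩, hg'⟩
    exact ⟨rfl, rfl, rfl⟩

theorem gs_total {G : Type*} [AddCommGroup G] [Fintype G] (A B : Finset G) :
    ∑ g : G, extDiffCount A B g = A.card * B.card := by
  classical
  unfold extDiffCount
  rw [← Finset.card_product]
  symm
  convert Finset.card_eq_sum_card_fiberwise (s := A ×ˢ B) (t := Finset.univ)
    (f := fun p : G × G => p.1 - p.2) (by intro x _; simp)

theorem gs_zero {G : Type*} [AddCommGroup G] (A B : Finset G) (h : Disjoint A B) :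
    extDiffCount A B 0 = 0 := by
  classical
  unfold extDiffCount
  rw [Finset.card_eq_zero, Finset.filter_eq_empty_iff]
  rintro ⟨a, b⟩ hab h0
  rw [Finset.mem_product] at hab
  have : a = b := sub_eq_zero.1 h0
  exact Finset.disjoint_left.1 h hab.1 (this ▸ hab.2)

theorem gs_neg {G : Type*} [AddCommGroup G] (A B : Finset G) (g : G) :
    extDiffCount A B g = extDiffCount B A (-g) := by
  classical
  unfold extDiffCount
  apply Finset.card_bij (fun p _ => (p.2, p.1))
  · rintro ⟨a, b⟩ h
    simp only [Finset.mem_filter, Finset.mem_product] at h ⊢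
    exact ⟨⟨h.1.2, h.1.1⟩, by rw [← h.2]; abel⟩
  · rintro ⟨a, b⟩ _ ⟨c, d⟩ _ h
    simp at h ⊢
    tauto
  · rintro ⟨a, b⟩ h
    simp only [Finset.mem_filter, Finset.mem_product] at h
    refine ⟨(b, a), ?_, rfl⟩
    simp only [Finset.mem_filter, Finset.mem_product]
    exact ⟨⟨h.1.2, h.1.1⟩, by rw [← neg_sub, h.2, neg_neg]⟩

theorem gs_count {G : Type*} [AddCommGroup G] [Fintype G] {v m : ℕ} {D : Fin m → Finset G}
    {k : Fin m → ℕ} (h : IsGSEDF v m D k (fun _ => 1)) (i : Fin m) :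
    v = k i * (∑ j ∈ Finset.univ.filter (· ≠ i), k j) + 1 := by
  classical
  obtain ⟨hv, hc, -, -, hd, hs⟩ := h
  have h1 : ∑ g : G, (∑ j ∈ Finset.univ.filter (· ≠ i), extDiffCount (D i) (D j) g)
      = k i * (∑ j ∈ Finset.univ.filter (· ≠ i), k j) := by
    rw [Finset.sum_comm, Finset.mul_sum]
    refine Finset.sum_congr rfl fun j _ => ?_
    rw [gs_total, hc, hc]
  have h2 : ∀ g : G, (∑ j ∈ Finset.univ.filter (· ≠ i), extDiffCount (D i) (D j) g)
      = if g = 0 then 0 else 1 := by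
    intro g
    split_ifs with hg
    · subst hg
      refine Finset.sum_eq_zero fun j hj => gs_zero _ _ (hd _ _ ?_)
      simp at hj
      exact fun h => hj h.symm
    · exact hs i g hg
  rw [← h1, Finset.sum_congr rfl fun g _ => h2 g, ← hv]
  have h3 : ∑ g : G, ((if g = 0 then 0 else 1) + (if g = 0 then 1 else 0)) = Fintype.card G := by
    rw [Finset.sum_congr rfl (g := fun _ => 1) (by intro g _; split_ifs <;> rfl)]
    simp
  rw [Finset.sum_add_distrib, Finset.sum_ite_eq'] at h3
  simpa using h3.symm

theorem gs_one {G : Type*} [AddCommGroup G] [Fintype G] {v m : ℕ} {D : Fin m → Finset G}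
    {k : Fin m → ℕ} (h : IsGSEDF v m D k (fun _ => 1)) (hm : 3 ≤ m) (i : Fin m) : k i = 1 := by
  classical
  obtain ⟨hv, hc, hk, -, hd, hs⟩ := h
  by_contra hne
  have h1 : 1 < (D i).card := by rw [hc]; have := hk i; omega
  obtain ⟨x, hx, y, hy, hxy⟩ := Finset.one_lt_card.1 h1
  have hd0 : x - y ≠ 0 := sub_ne_zero.2 hxy
  have ne0 : ∀ {p q : Fin m} {a b : G}, p ≠ q → a ∈ D p → b ∈ D q → a - b ≠ 0 := by
    intro p q a b hpq ha hb h0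
    have : a = b := sub_eq_zero.1 h0
    exact Finset.disjoint_left.1 (hd p q hpq) ha (this ▸ hb)
  have step : ∀ p, p ≠ i → ∃ a ∈ D p, ∃ b ∈ D i, a - b = x - y := by
    intro p hp
    obtain ⟨j, hj, a, ha, b, hb, hab⟩ := (gs_mem (hs p _ hd0)).1
    by_cases hji : j = i
    · subst hji; exact ⟨a, ha, b, hb, hab⟩
    · exfalso
      have hz : x - a ≠ 0 := ne0 (Ne.symm hp) hx ha
      have e : y - b = x - a := by
        have : y - b = (a - b) + y - a := by abel
        rw [this, hab]; abel
      exact hxy ((gs_mem (hs i _ hz)).2 p j x y a b hp hji hx hy ha hb rfl e).2.1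
  obtain ⟨p, q, hp, hq, hpq⟩ : ∃ p q : Fin m, p ≠ i ∧ q ≠ i ∧ p ≠ q := by
    have : 1 < (Finset.univ.erase i).card := by
      rw [Finset.card_erase_of_mem (Finset.mem_univ _)]; simp; omega
    obtain ⟨p, hp, q, hq, hpq⟩ := Finset.one_lt_card.1 this
    exact ⟨p, q, by simpa using hp, by simpa using hq, hpq⟩
  obtain ⟨a, ha, b, hb, hab⟩ := step p hp
  obtain ⟨c, hc', d, hd', hcd⟩ := step q hq
  have hz : y - x ≠ 0 := sub_ne_zero.2 (Ne.symm hxy)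
  exact hpq ((gs_mem (hs i _ hz)).2 p q b d a c hp hq hb hd' ha hc'
    (by rw [← neg_sub, hab, neg_sub]) (by rw [← neg_sub, hcd, neg_sub])).1

theorem gs_pair (a b : ℕ) (ha : 0 < a) (hb : 0 < b) :
    ∃ A B : Finset (ZMod (a * b + 1)), A.card = a ∧ B.card = b ∧ Disjoint A B ∧
      ∀ g, g ≠ 0 → extDiffCount B A g = 1 := by
  classical
  have inj : ∀ n n' : ℕ, n < a * b + 1 → n' < a * b + 1 →
      (n : ZMod (a * b + 1)) = n' → n = n' := by
    intro n n' h h' e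
    have := congrArg ZMod.val e
    rwa [ZMod.val_cast_of_lt h, ZMod.val_cast_of_lt h'] at this
  have bd : ∀ q r, q < b → r < a → a * q + r + 1 < a * b + 1 := by
    intro q r hq hr
    have : a * (q + 1) ≤ a * b := Nat.mul_le_mul_left _ hq
    rw [mul_add] at this
    omega
  have dec : ∀ q r q' r', r < a → r' < a → a * q + r = a * q' + r' → q = q' ∧ r = r' := by
    intro q r q' r' hr hr' e
    have h1 := congrArg (· / a) e
    have h2 := congrArg (· % a) e
    simp only [Nat.mul_add_div ha, Nat.mul_add_mod, Nat.div_eq_of_lt hr, Nat.div_eq_of_lt hr',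
      Nat.mod_eq_of_lt hr, Nat.mod_eq_of_lt hr'] at h1 h2
    exact ⟨by omega, h2⟩
  refine ⟨(Finset.range a).image (fun r : ℕ => -(r : ZMod (a * b + 1))),
    (Finset.range b).image (fun q : ℕ => ((a * q + 1 : ℕ) : ZMod (a * b + 1))), ?_, ?_, ?_, ?_⟩
  · rw [Finset.card_image_of_injOn, Finset.card_range]
    intro r hr r' hr' e
    simp only [Finset.coe_range, Set.mem_Iio] at hr hr'
    have := bd 0 r hb hr
    have := bd 0 r' hb hr'
    exact inj _ _ (by omega) (by omega) (neg_injective e)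
  · rw [Finset.card_image_of_injOn, Finset.card_range]
    intro r hr r' hr' e
    simp only [Finset.coe_range, Set.mem_Iio] at hr hr'
    have h1 := bd r 0 hr ha
    have h2 := bd r' 0 hr' ha
    have := inj _ _ h1 h2 e
    exact (dec r 0 r' 0 ha ha (by omega)).1
  · rw [Finset.disjoint_left]
    intro x h1 h2
    simp only [Finset.mem_image, Finset.mem_range] at h1 h2
    obtain ⟨r, hr, rfl⟩ := h1
    obtain ⟨q, hq, e⟩ := h2
    have := inj (a * q + r + 1) 0 (bd q r hq hr) (by omega) (by
      push_cast at e ⊢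
      linear_combination e)
    omega
  · intro g hg
    unfold extDiffCount
    rw [Finset.card_eq_one]
    have hv : g.val < a * b + 1 := ZMod.val_lt g
    have hv0 : g.val ≠ 0 := by rwa [Ne, ZMod.val_eq_zero]
    have hgv : ((g.val : ℕ) : ZMod (a * b + 1)) = g := ZMod.natCast_zmod_val g
    have hq : (g.val - 1) / a < b := by
      rw [Nat.div_lt_iff_lt_mul ha]; have := mul_comm a b; omega
    have hr : (g.val - 1) % a < a := Nat.mod_lt _ ha
    have hdm := Nat.div_add_mod (g.val - 1) a
    generalize (g.val - 1) / a = q at *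
    generalize (g.val - 1) % a = r at *
    have hval : g.val = a * q + r + 1 := by omega
    rw [hval] at hgv
    refine ⟨(((a * q + 1 : ℕ) : ZMod (a * b + 1)), -(r : ZMod (a * b + 1))), ?_⟩
    ext ⟨x, y⟩
    simp only [Finset.mem_filter, Finset.mem_product, Finset.mem_image, Finset.mem_range,
      Finset.mem_singleton, Prod.mk.injEq]
    constructor
    · rintro ⟨⟨⟨q', hq', rfl⟩, ⟨r', hr', rfl⟩⟩, e⟩
      have := inj _ _ (bd q' r' hq' hr') (bd q r hq hr) (by
        rw [hgv, ← e]; push_cast; ring)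
      obtain ⟨rfl, rfl⟩ := dec q' r' q r hr' hr (by omega)
      exact ⟨rfl, rfl⟩
    · rintro ⟨rfl, rfl⟩
      exact ⟨⟨⟨q, hq, rfl⟩, ⟨r, hr, rfl⟩⟩, by rw [← hgv]; push_cast; ring⟩

/-- a `(v, m; k₁,...,k_m; 1,...,1)`-GSEDF exists iff either `m = 2` and
`v = k₁k₂ + 1`, or all `k i = 1` and `v = m`. -/
theorem gsedf_all_one_existence (v m : ℕ) (hm : 2 ≤ m) (k : Fin m → ℕ)
    (hk : ∀ i, 0 < k i) :
    (∃ (G : Type) (instG : AddCommGroup G) (instF : Fintype G)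
        (D : Fin m → Finset G),
        @IsGSEDF G instG instF v m D k (fun _ => 1)) ↔
      ((m = 2 ∧ ∀ i j : Fin m, i ≠ j → v = k i * k j + 1) ∨
       ((∀ i, k i = 1) ∧ v = m)) := by
  classical
  constructor
  · rintro ⟨G, instG, instF, D, h⟩
    by_cases h2 : m = 2
    · left
      refine ⟨h2, fun i j hij => ?_⟩
      have := gs_count h i
      have hf : Finset.univ.filter (· ≠ i) = {j} := by
        subst h2
        ext x
        simp only [Finset.mem_filter, Finset.mem_univ, true_and, Finset.mem_singleton]
        omega
      rwa [hf, Finset.sum_singleton] at this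
    · right
      have h1 := gs_one h (show 3 ≤ m by omega)
      refine ⟨h1, ?_⟩
      have := gs_count h ⟨0, by omega⟩
      rw [Finset.sum_congr rfl fun j _ => h1 j, h1, Finset.filter_ne'] at this
      simp at this
      omega
  · rintro (⟨rfl, h⟩ | ⟨h1, rfl⟩)
    · obtain ⟨A, B, hA, hB, hd, hs⟩ := gs_pair (k 0) (k 1) (hk 0) (hk 1)
      have hv := h 0 1 (by decide)
      refine ⟨ZMod (k 0 * k 1 + 1), inferInstance, inferInstance, ![A, B], ?_, ?_, hk,
        fun _ => one_pos, ?_, ?_⟩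
      · rw [ZMod.card, hv]
      · intro i; fin_cases i <;> simpa
      · intro i j hij
        fin_cases i <;> fin_cases j <;> simp_all [disjoint_comm]
      · intro i g hg
        fin_cases i
        · rw [show Finset.univ.filter (· ≠ (⟨0, by omega⟩ : Fin 2)) = {1} by ext x; simp; omega]
          simp only [Finset.sum_singleton]
          exact (gs_neg A B g).trans (hs _ (neg_ne_zero.2 hg))
        · rw [show Finset.univ.filter (· ≠ (⟨1, by omega⟩ : Fin 2)) = {0} by ext x; simp; omega]
          simp only [Finset.sum_singleton]
          exact hs g hg
    · have : NeZero v := ⟨by omega⟩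
      refine ⟨Fin v, inferInstance, inferInstance, fun i => {i}, by simp, ?_, hk,
        fun _ => one_pos, ?_, ?_⟩
      · intro i; simp [h1]
      · intro i j hij; simpa using hij
      · intro i g hg
        rw [Finset.sum_eq_single_of_mem (i - g) (by simpa using hg)]
        · simp [extDiffCount, Finset.filter_singleton]
        · intro j _ hj
          have : i - j ≠ g := by rintro rfl; exact hj (by abel)
          simp [extDiffCount, Finset.filter_singleton, this]
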